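/- Under the oracle setting, assume F := G_y(A·) satisfies the BRSC property with respect to Ψ, a compact convex set X containing both x^or and x*, and K ≥ 2k*, with constant C_K > 0; assume the concavity condition (CC) holds; and let L̃ > 0 satisfy ‖∇G_y(w)‖₂ ≤ √(2L̃·G_y(w)) for all w ∈ {Ax : x ∈ C^N}. Let S ⊆ C^{k*} contain u^or, let Ω := ∪_{j=1}^{k*} {u ∈ C^{k*} : u_j ∈ [−α_{σ*[j]}, α_{σ*[j]}]} and Ω̃ := ∪_{j=1}^{k*} {u ∈ C^{k*} : ψ'_{σ*[j]}(u_j) ∈ [−ρ_j, ρ_j]} with ρ_j := (ψ'_{σ*[j]}(α_{σ*[j]}) − ψ'_{σ*[j]}(0))/C_K + ψ'_{σ*[j]}(0). Suppose either (a) C_K > 1, S ∩ Ω = ∅, and ‖a_i‖₂√(2L̃·F(x*)) ≤ ψ_i'(α_i) − ψ_i'(0) for all i ∉ σ*, or (b) C_K ≤ 1, S ∩ Ω̃ = ∅, and ‖a_i‖₂√(2L̃·F(x*)) < C_K(ψ_i'(α_i) − ψ_i'(0)) for all i ∉ σ*; and in addition λ₀ > F(x*)/(1 + K − 2k*). Then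 x^or is the unique global minimizer of J_Ψ (and of J₀) with support of x^or equal to σ*, and every critical point x' of J_Ψ with x' ≠ x^or satisfies ‖x' − x^or‖₀ > K. -/

import Mathlib

open Classical

noncomputable section

/-- `‖x‖₀`: the number of nonzero entries of a vector. -/
def norm0 {ι : Type*} [Fintype ι] (x : ι → ℝ) : ℕ :=
  (Finset.univ.filter fun i => x i ≠ 0).card

/-- Euclidean inner product on `ι → ℝ`. -/
def dotp {ι : Type*} [Fintype ι] (x y : ι → ℝ) : ℝ := ∑ i, x i * y i

/-- squared Euclidean norm. -/
def sqnorm {ι : Type*} [Fintype ι] (x : ι → ℝ) : ℝ := ∑ i, (x i) ^ 2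

/-- Euclidean norm. -/
def enorm2 {ι : Type*} [Fintype ι] (x : ι → ℝ) : ℝ := Real.sqrt (sqnorm x)


/-- one-dimensional Bregman divergence `d_ψ(x, x') = ψ(x) - ψ(x') - ψ'(x')(x - x')`,
with the derivative `dψ` of `ψ` given as data. -/
def dBreg (ψ dψ : ℝ → ℝ) (x x' : ℝ) : ℝ := ψ x - ψ x' - dψ x' * (x - x')

/-- The data-fidelity setting of the paper (Assumption 1.3): a separable fidelity term
`G_y(w) = Σ_j g_j(w_j)` where each `g j` is nonnegative, strictly convex, twice
differentiable on the interior of its domain, with an `L`-Lipschitz derivative `dg j`;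
a matrix `A`; and the constraint set `𝒞` equal to `ℝ` or `ℝ_{≥0}`. -/
structure FidSetting (M N : ℕ) where
  𝒞 : Set ℝ
  h𝒞 : 𝒞 = Set.univ ∨ 𝒞 = Set.Ici 0
  A : Matrix (Fin M) (Fin N) ℝ
  domg : Fin M → Set ℝ
  g : Fin M → ℝ → ℝ
  dg : Fin M → ℝ → ℝ
  L : ℝ
  hL : 0 < L
  hdom : ∀ x : Fin N → ℝ, (∀ i, x i ∈ 𝒞) → ∀ j, (A.mulVec x) j ∈ interior (domg j)
  hg_nonneg : ∀ j, ∀ w ∈ domg j, 0 ≤ g j w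
  hg_sconv : ∀ j, StrictConvexOn ℝ (domg j) (g j)
  hg_deriv : ∀ j, ∀ w ∈ interior (domg j), HasDerivAt (g j) (dg j w) w
  hg_deriv2 : ∀ j, ∀ w ∈ interior (domg j), DifferentiableAt ℝ (dg j) w
  hg_lip : ∀ j, ∀ w ∈ domg j, ∀ v ∈ domg j, |dg j w - dg j v| ≤ L * |w - v|

/-- the feasible set `𝒞^N`. -/
def FidSetting.feas {M N : ℕ} (S : FidSetting M N) : Set (Fin N → ℝ) :=
  {x | ∀ i, x i ∈ S.𝒞}

/-- the data term `F(x) = G_y(Ax)`. -/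
def FidSetting.F {M N : ℕ} (S : FidSetting M N) (x : Fin N → ℝ) : ℝ :=
  ∑ j, S.g j (S.A.mulVec x j)

/-- the gradient `∇F(x) = Aᵀ ∇G_y(Ax)`. -/
def FidSetting.gradF {M N : ℕ} (S : FidSetting M N) (x : Fin N → ℝ) : Fin N → ℝ :=
  fun i => ∑ j, S.A j i * S.dg j (S.A.mulVec x j)

/-- the Bregman-generating setting (Definition 3.1 of the paper): `Ψ(x) = Σ_i ψ_i(x_i)`
with each `ψ_i` strictly convex, twice differentiable, `t ↦ ψ_i'(t)t - ψ_i(t)` coercive,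
and `ψ_i'` odd when `𝒞 = ℝ` (resp. `ψ_i'(0) ≥ 0` when `𝒞 = ℝ_{≥0}`). -/
structure PsiSetting (N : ℕ) (𝒞 : Set ℝ) where
  ψ : Fin N → ℝ → ℝ
  dψ : Fin N → ℝ → ℝ
  hconv : ∀ i, StrictConvexOn ℝ 𝒞 (ψ i)
  hderiv : ∀ i, ∀ t ∈ 𝒞, HasDerivWithinAt (ψ i) (dψ i t) 𝒞 t
  hderiv2 : ∀ i, ∀ t ∈ interior 𝒞, DifferentiableAt ℝ (dψ i) t
  hcoer : ∀ i, ∀ c : ℝ, ∃ R : ℝ, ∀ t ∈ 𝒞, R ≤ |t| → c ≤ dψ i t * t - ψ i t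
  hodd : 𝒞 = Set.univ → ∀ i t, dψ i (-t) = -(dψ i t)
  hnn : 𝒞 = Set.Ici 0 → ∀ i, 0 ≤ dψ i 0

/-- `∇Ψ(x)`. -/
def PsiSetting.gradPsi {N : ℕ} {𝒞 : Set ℝ} (P : PsiSetting N 𝒞) (x : Fin N → ℝ) :
    Fin N → ℝ :=
  fun i => P.dψ i (x i)

/-- the scalar B-rex penalty `β_{ψ_i}`. -/
def betaPen {N : ℕ} {𝒞 : Set ℝ} (P : PsiSetting N 𝒞) (α : Fin N → ℝ) (lam0 : ℝ)
    (i : Fin N) (t : ℝ) : ℝ :=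
  if |t| ≤ α i then P.ψ i 0 - P.ψ i t + Real.sign t * P.dψ i (α i) * t else lam0

/-- the relaxed objective `J_Ψ(x) = G_y(Ax) + B_Ψ(x)`. -/
def JPsi {M N : ℕ} (S : FidSetting M N) (P : PsiSetting N S.𝒞) (α : Fin N → ℝ) (lam0 : ℝ)
    (x : Fin N → ℝ) : ℝ :=
  S.F x + ∑ i, betaPen P α lam0 i (x i)

/-- the `ℓ₀`-regularized objective `J₀(x) = G_y(Ax) + λ₀‖x‖₀`. -/
def J0 {M N : ℕ} (S : FidSetting M N) (lam0 : ℝ) (x : Fin N → ℝ) : ℝ :=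
  S.F x + lam0 * (norm0 x : ℝ)

/-- the subdifferential `∂h_i` of `h_i = β_{ψ_i} + ψ_i` (closed form). -/
def subdiffH (𝒞 : Set ℝ) (dψ : ℝ → ℝ) (α : ℝ) (t : ℝ) : Set ℝ :=
  if 𝒞 = Set.univ then
    if t = 0 then Set.Icc (-(dψ α)) (dψ α)
    else if |t| ≤ α then {Real.sign t * dψ α}
    else {dψ t}
  else
    if t ≤ α then {dψ α} else {dψ t}

/-- `z(x) = ∇Ψ(x) - Aᵀ∇G_y(Ax)`. -/
def zmap {M N : ℕ} (S : FidSetting M N) (P : PsiSetting N S.𝒞) (x : Fin N → ℝ) :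
    Fin N → ℝ :=
  fun i => P.dψ i (x i) - S.gradF x i

/-- `x ∈ 𝒞^N` is a critical point of `J_Ψ` iff `z_i(x) ∈ ∂h_i(x_i)` for every `i`. -/
def IsCritical {M N : ℕ} (S : FidSetting M N) (P : PsiSetting N S.𝒞) (α : Fin N → ℝ)
    (x : Fin N → ℝ) : Prop :=
  x ∈ S.feas ∧ ∀ i, zmap S P x i ∈ subdiffH S.𝒞 (P.dψ i) (α i) (x i)

/-- `F = G_y(A·)` satisfies BRSC with respect to `Ψ`, `X`, `K`, with constant `CK`. -/
def BRSCholds {M N : ℕ} (S : FidSetting M N) (P : PsiSetting N S.𝒞)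
    (X : Set (Fin N → ℝ)) (K : ℕ) (CK : ℝ) : Prop :=
  ∀ x ∈ X, ∀ x' ∈ S.feas, x ≠ x' → norm0 (x - x') ≤ K →
    CK * dotp (P.gradPsi x - P.gradPsi x') (x - x')
      ≤ dotp (S.gradF x - S.gradF x') (x - x')

/-- the concavity condition (CC). -/
def CCond {M N : ℕ} (S : FidSetting M N) (P : PsiSetting N S.𝒞) (α : Fin N → ℝ)
    (lam0 : ℝ) : Prop :=
  ∀ x ∈ S.feas, ∀ i : Fin N,
    StrictConcaveOn ℝ (Set.Ioo (-(α i)) 0) (fun t => JPsi S P α lam0 (Function.update x i t)) ∧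
    StrictConcaveOn ℝ (Set.Ioo 0 (α i)) (fun t => JPsi S P α lam0 (Function.update x i t))

/-- the support of a vector, as a `Finset`. -/
def suppF {N : ℕ} (x : Fin N → ℝ) : Finset (Fin N) := Finset.univ.filter fun i => x i ≠ 0

/-- zero padding operator: entries indexed by `σ` equal those of `u`, others are `0`. -/
def zpad {N : ℕ} (σ : Finset (Fin N)) (u : {i // i ∈ σ} → ℝ) : Fin N → ℝ :=
  fun i => if h : i ∈ σ then u ⟨i, h⟩ else 0

/-- the restricted data term `F_σ(u) = G_y(A_σ u)`. -/
def Fres {M N : ℕ} (S : FidSetting M N) (σ : Finset (Fin N)) (u : {i // i ∈ σ} → ℝ) : ℝ :=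
  S.F (zpad σ u)

/-
Let `x ≠ x^or` be feasible and within `K` nonzeros of `x^or`, and let `z` be any selection with
`z_i ∈ ∂h_i(x_i)`. BRSC bounds `⟨z - z(x), x - x^or⟩` from below by the separable sum of
`(∂_i F(x^or) + C_K (ψ_i'(x_i) - ψ_i'(x^or_i)) + z_i - ψ_i'(x_i)) (x_i - x^or_i)`, and conditions
(a) and (b) make every nonvanishing factor `x_i - x^or_i` contribute a positive term. Hence
`z(x)` is not such a selection, so `x` is not critical. Moreover the right derivative of `J_Ψ` along
the segment from `x^or` to `x` has exactly this form, up to a positive factor, so `J_Ψ` increases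
strictly along it.

Far from `x^or`, strict concavity moves each entry lying strictly between zero and its threshold to
an endpoint while decreasing `J_Ψ`. At the resulting points `J_Ψ = J₀`, and more than `K` nonzeros
of `x - x^or` force `λ₀ ‖x‖₀ ≥ λ₀ (K + 1 - k*) > F(x^or) + λ₀ k*`.
-/

open Set Filter Topology

lemma forall_not_of_inter_eq_empty {β κ : Type*} {s : Set β} {p : κ → β → Prop} {b : β}
    (h : s ∩ {b | ∃ k, p k b} = ∅) (hb : b ∈ s) (k : κ) : ¬ p k b := fun hk =>
  (h.subset ⟨hb, k, hk⟩ : b ∈ (∅ : Set β))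

section RealAnalysis

variable {f : ℝ → ℝ} {a b t : ℝ}

lemma strictMonoOn_Ioc_of_hasDerivWithinAt_Ici_pos (hf : ContinuousOn f (Ioc a b))
    (hf' : ∀ s ∈ Ioo a b, ∃ f' > 0, HasDerivWithinAt f f' (Ici s) s) :
    StrictMonoOn f (Ioc a b) := by
  intro c hc d hd hcd
  have not_isMax : ∀ s ∈ Ico c d, ∃ r ∈ Icc c d, f s < f r := by
    intro s hs
    obtain ⟨f', hf'_pos, hderiv⟩ := hf' s ⟨hc.1.trans_le hs.1, hs.2.trans_le hd.2⟩
    have hslope := (hasDerivWithinAt_iff_tendsto_slope' self_notMem_Ioi).1 hderiv.Ioi_of_Ici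
    obtain ⟨r, hr_slope, hsr, hrd⟩ :=
      ((hslope.eventually (lt_mem_nhds hf'_pos)).and (Ioo_mem_nhdsGT hs.2)).exists
    exact ⟨r, ⟨hs.1.trans hsr.le, hrd.le⟩, (slope_pos_iff_of_le hsr.le).1 hr_slope⟩
  obtain ⟨m, hm, hmax⟩ := isCompact_Icc.exists_isMaxOn (nonempty_Icc.2 hcd.le)
    (hf.mono fun s hs => ⟨hc.1.trans_le hs.1, hs.2.trans hd.2⟩)
  obtain rfl : m = d := by
    by_contra hmd
    obtain ⟨r, hr, hlt⟩ := not_isMax m ⟨hm.1, hm.2.lt_of_ne hmd⟩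
    exact hlt.not_ge (hmax hr)
  obtain ⟨r, hr, hlt⟩ := not_isMax c ⟨le_rfl, hcd⟩
  exact hlt.trans_le (hmax hr)

lemma lt_of_hasDerivWithinAt_Ici_pos (hab : a < b) (hf : ContinuousOn f (Icc a b))
    (hf' : ∀ s ∈ Ioo a b, ∃ f' > 0, HasDerivWithinAt f f' (Ici s) s) : f a < f b := by
  have hmono := strictMonoOn_Ioc_of_hasDerivWithinAt_Ici_pos (hf.mono Ioc_subset_Icc_self) hf'
  obtain ⟨m, ham, hmb⟩ := exists_between hab
  have hlim : Tendsto f (𝓝[>] a) (𝓝 (f a)) :=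
    (continuousWithinAt_Icc_iff_Ici hab |>.1 (hf a (left_mem_Icc.2 hab.le))).mono_left
      (nhdsWithin_mono a Ioi_subset_Ici_self)
  have hle : f a ≤ f m := le_of_tendsto hlim <| by
    filter_upwards [Ioo_mem_nhdsGT ham] with s hs
    exact (hmono ⟨hs.1, (hs.2.trans hmb).le⟩ ⟨ham, hmb.le⟩ hs.2).le
  exact hle.trans_lt (hmono ⟨ham, hmb.le⟩ ⟨hab, le_rfl⟩ hmb)

lemma not_isMinOn_Icc_of_strictConcaveOn_Ioo (hf : StrictConcaveOn ℝ (Ioo a b) f)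
    (ht : t ∈ Ioo a b) : ¬ IsMinOn f (Icc a b) t := by
  intro hmin
  obtain ⟨l, hal, hlt⟩ := exists_between ht.1
  obtain ⟨r, htr, hrb⟩ := exists_between ht.2
  have hl : l ∈ Ioo a b := ⟨hal, hlt.trans ht.2⟩
  have hr : r ∈ Ioo a b := ⟨ht.1.trans htr, hrb⟩
  have hmin_lt : min (f l) (f r) < f t :=
    hf.lt_on_openSegment hl hr (hlt.trans htr).ne
      (openSegment_eq_Ioo (hlt.trans htr) ▸ ⟨hlt, htr⟩)
  exact hmin_lt.not_ge
    (le_min (hmin (Ioo_subset_Icc_self hl)) (hmin (Ioo_subset_Icc_self hr)))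

lemma exists_endpoint_lt_of_strictConcaveOn (hf : StrictConcaveOn ℝ (Ioo a b) f)
    (hc : ContinuousOn f (Icc a b)) (ht : t ∈ Ioo a b) : f a < f t ∨ f b < f t := by
  obtain ⟨s, hs, hmin⟩ := isCompact_Icc.exists_isMinOn ⟨t, Ioo_subset_Icc_self ht⟩ hc
  have hlt : f s < f t := lt_of_not_ge fun hts =>
    not_isMinOn_Icc_of_strictConcaveOn_Ioo hf ht fun r hr => hts.trans (hmin hr)
  rcases eq_endpoints_or_mem_Ioo_of_mem_Icc hs with rfl | rfl | hs'
  · exact .inl hlt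
  · exact .inr hlt
  · exact (not_isMinOn_Icc_of_strictConcaveOn_Ioo hf hs' hmin).elim

end RealAnalysis

section SparseVectors

variable {ι : Type*} [Fintype ι]

lemma norm0_eq_hammingNorm (x : ι → ℝ) : norm0 x = hammingNorm x := by
  unfold norm0 hammingNorm
  congr

lemma norm0_neg (x : ι → ℝ) : norm0 (-x) = norm0 x := by
  simp only [norm0, Pi.neg_apply, ne_eq, neg_eq_zero]

lemma norm0_smul_le (s : ℝ) (x : ι → ℝ) : norm0 (s • x) ≤ norm0 x := by
  simpa only [norm0_eq_hammingNorm] using hammingNorm_smul_le_hammingNorm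

lemma norm0_sub_le (x y : ι → ℝ) : norm0 (x - y) ≤ norm0 x + norm0 y := by
  simp only [norm0_eq_hammingNorm]
  rw [sub_eq_neg_add, ← hammingDist_eq_hammingNorm, hammingDist_comm,
    ← hammingDist_zero_right x, ← hammingDist_zero_right y]
  exact hammingDist_triangle_right x y 0

lemma norm0_mul_eq_sum (c : ℝ) (x : ι → ℝ) : c * norm0 x = ∑ i, if x i = 0 then 0 else c := by
  simp [norm0, Finset.sum_ite, mul_comm]

lemma dotp_smul (s : ℝ) (x y : ι → ℝ) : dotp x (s • y) = s * dotp x y := by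
  simp only [dotp, Pi.smul_apply, smul_eq_mul, Finset.mul_sum, mul_left_comm]

lemma enorm2_nonneg (x : ι → ℝ) : 0 ≤ enorm2 x := Real.sqrt_nonneg _

lemma abs_dotp_le (x y : ι → ℝ) : |dotp x y| ≤ enorm2 x * enorm2 y := by
  have hx : 0 ≤ sqnorm x := Finset.sum_nonneg fun i _ => sq_nonneg (x i)
  rw [enorm2, enorm2, ← Real.sqrt_mul hx]
  exact Real.abs_le_sqrt (Finset.sum_mul_sq_le_sq_mul_sq _ x y)

end SparseVectors

/-- The two shapes the coordinate domain may take: the whole line or the nonnegative half-line. -/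
def IsRayOrLine (𝒞 : Set ℝ) : Prop := 𝒞 = univ ∨ 𝒞 = Ici 0

namespace IsRayOrLine

variable {𝒞 : Set ℝ} {t : ℝ}

lemma mem_of_nonneg (h : IsRayOrLine 𝒞) (ht : 0 ≤ t) : t ∈ 𝒞 := by
  rcases h with rfl | rfl
  exacts [mem_univ t, ht]

lemma zero_mem (h : IsRayOrLine 𝒞) : (0 : ℝ) ∈ 𝒞 := h.mem_of_nonneg le_rfl

lemma eq_univ_of_neg_mem (h : IsRayOrLine 𝒞) (ht : t ∈ 𝒞) (ht0 : t < 0) : 𝒞 = univ :=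
  h.resolve_right fun h' => ht0.not_ge (h' ▸ ht : t ∈ Ici 0)

lemma convex (h : IsRayOrLine 𝒞) : Convex ℝ 𝒞 := by
  rcases h with rfl | rfl
  exacts [convex_univ, convex_Ici 0]

lemma mem_nhds_of_ne_zero (h : IsRayOrLine 𝒞) (ht : t ∈ 𝒞) (ht0 : t ≠ 0) : 𝒞 ∈ 𝓝 t := by
  rcases h with rfl | rfl
  exacts [univ_mem, Ici_mem_nhds (ht.lt_of_ne' ht0)]

lemma abs_mem (h : IsRayOrLine 𝒞) : |t| ∈ 𝒞 := h.mem_of_nonneg (abs_nonneg t)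

end IsRayOrLine

namespace PsiSetting

variable {N : ℕ} {𝒞 : Set ℝ} (P : PsiSetting N 𝒞) (i : Fin N) {s t : ℝ}

lemma strictMonoOn_dψ : StrictMonoOn (P.dψ i) 𝒞 := fun s hs t ht hst =>
  ((P.hconv i).lt_slope_of_hasDerivWithinAt hs ht hst (P.hderiv i s hs)).trans
    ((P.hconv i).slope_lt_of_hasDerivWithinAt hs ht hst (P.hderiv i t ht))

lemma dBreg_nonneg (hs : s ∈ 𝒞) (ht : t ∈ 𝒞) : 0 ≤ dBreg (P.ψ i) (P.dψ i) s t := by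
  unfold dBreg
  rcases lt_trichotomy s t with hst | rfl | hts
  · have hslope := (P.hconv i).slope_lt_of_hasDerivWithinAt hs ht hst (P.hderiv i t ht)
    rw [slope_def_field, div_lt_iff₀ (sub_pos.2 hst)] at hslope
    linarith
  · simp
  · have hslope := (P.hconv i).lt_slope_of_hasDerivWithinAt ht hs hts (P.hderiv i t ht)
    rw [slope_def_field, lt_div_iff₀ (sub_pos.2 hts)] at hslope
    linarith

lemma dψ_zero (h𝒞 : 𝒞 = univ) : P.dψ i 0 = 0 := by
  have hodd := P.hodd h𝒞 i 0
  rw [neg_zero] at hodd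
  linarith

lemma dψ_zero_nonneg (h𝒞 : IsRayOrLine 𝒞) : 0 ≤ P.dψ i 0 :=
  h𝒞.elim (fun h => (P.dψ_zero i h).ge) (fun h => P.hnn h i)

lemma ψ_neg (h𝒞 : 𝒞 = univ) (t : ℝ) : P.ψ i (-t) = P.ψ i t := by
  have hderiv : ∀ t, HasDerivAt (P.ψ i) (P.dψ i t) t := fun t =>
    (P.hderiv i t (h𝒞 ▸ mem_univ t)).hasDerivAt (h𝒞 ▸ univ_mem)
  have hdiff : ∀ t, HasDerivAt (fun t => P.ψ i (-t) - P.ψ i t) 0 t := fun t => by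
    simpa [Function.comp_def, P.hodd h𝒞] using
      ((hderiv (-t)).comp t (hasDerivAt_neg t)).fun_sub (hderiv t)
  have hconst := is_const_of_deriv_eq_zero (fun t => (hdiff t).differentiableAt)
    (fun t => (hdiff t).deriv) t 0
  simpa [sub_eq_zero] using hconst

/-- `α` collects the paper's thresholds `α_i`, defined by `d_{ψ_i}(0, α_i) = λ₀`. -/
def IsThreshold (lam0 : ℝ) (α : Fin N → ℝ) : Prop :=
  ∀ i, 0 < α i ∧ dBreg (P.ψ i) (P.dψ i) 0 (α i) = lam0

end PsiSetting

section Penalty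

variable {N : ℕ} {𝒞 : Set ℝ} {P : PsiSetting N 𝒞} {α : Fin N → ℝ} {lam0 : ℝ} {i : Fin N} {t : ℝ}

lemma betaPen_zero (hα : 0 ≤ α i) : betaPen P α lam0 i 0 = 0 := by
  simp [betaPen, hα]

lemma betaPen_neg (h𝒞 : 𝒞 = univ) (t : ℝ) :
    betaPen P α lam0 i (-t) = betaPen P α lam0 i t := by
  simp [betaPen, P.ψ_neg i h𝒞, Real.sign_neg]

lemma betaPen_abs (h𝒞 : IsRayOrLine 𝒞) (ht : t ∈ 𝒞) :
    betaPen P α lam0 i |t| = betaPen P α lam0 i t := by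
  rcases le_or_gt 0 t with h0 | h0
  · rw [abs_of_nonneg h0]
  · rw [abs_of_neg h0, betaPen_neg (h𝒞.eq_univ_of_neg_mem ht h0)]

lemma betaPen_of_nonneg_of_le (ht0 : 0 ≤ t) (htα : t ≤ α i) :
    betaPen P α lam0 i t = P.ψ i 0 - P.ψ i t + P.dψ i (α i) * t := by
  rw [betaPen, if_pos ((abs_of_nonneg ht0).trans_le htα)]
  rcases ht0.eq_or_lt with rfl | ht0
  · simp
  · rw [Real.sign_of_pos ht0, one_mul]

lemma betaPen_eq_sub_dBreg (hα : P.IsThreshold lam0 α) (ht0 : 0 ≤ t) (htα : t ≤ α i) :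
    betaPen P α lam0 i t = lam0 - dBreg (P.ψ i) (P.dψ i) t (α i) := by
  rw [betaPen_of_nonneg_of_le ht0 htα, ← (hα i).2]
  simp only [dBreg]
  ring

lemma betaPen_of_le_abs (h𝒞 : IsRayOrLine 𝒞) (hα : P.IsThreshold lam0 α) (ht : t ∈ 𝒞)
    (htα : α i ≤ |t|) : betaPen P α lam0 i t = lam0 := by
  rcases htα.eq_or_lt with h | h
  · rw [← betaPen_abs h𝒞 ht, betaPen_eq_sub_dBreg hα (abs_nonneg t) h.ge, ← h]
    simp [dBreg]
  · rw [betaPen, if_neg h.not_ge]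

lemma betaPen_le (h𝒞 : IsRayOrLine 𝒞) (hα : P.IsThreshold lam0 α) (ht : t ∈ 𝒞) :
    betaPen P α lam0 i t ≤ lam0 := by
  rcases le_total |t| (α i) with h | h
  · rw [← betaPen_abs h𝒞 ht, betaPen_eq_sub_dBreg hα (abs_nonneg t) h]
    linarith [P.dBreg_nonneg i (h𝒞.abs_mem (t := t)) (h𝒞.mem_of_nonneg (hα i).1.le)]
  · exact (betaPen_of_le_abs h𝒞 hα ht h).le

lemma hasDerivWithinAt_betaPen (h𝒞 : IsRayOrLine 𝒞) (hα : P.IsThreshold lam0 α) (ht : 0 ≤ t) :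
    HasDerivWithinAt (betaPen P α lam0 i)
      (max (P.dψ i (α i)) (P.dψ i t) - P.dψ i t) (Ici 0) t := by
  have hmono : MonotoneOn (P.dψ i) 𝒞 := (P.strictMonoOn_dψ i).monotoneOn
  have hα𝒞 : α i ∈ 𝒞 := h𝒞.mem_of_nonneg (hα i).1.le
  have ht𝒞 : t ∈ 𝒞 := h𝒞.mem_of_nonneg ht
  have hleft : HasDerivWithinAt (betaPen P α lam0 i)
      (max (P.dψ i (α i)) (P.dψ i t) - P.dψ i t) (Icc 0 (α i)) t := by
    by_cases htα : t ≤ α i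
    · have hψ := (P.hderiv i t ht𝒞).mono fun s (hs : s ∈ Icc 0 (α i)) => h𝒞.mem_of_nonneg hs.1
      rw [max_eq_left (hmono ht𝒞 hα𝒞 htα), sub_eq_neg_add]
      refine ((hψ.const_sub (P.ψ i 0)).add ?_).congr
        (fun s hs => betaPen_of_nonneg_of_le hs.1 hs.2) (betaPen_of_nonneg_of_le ht htα)
      simpa using (hasDerivWithinAt_id t _).const_mul (P.dψ i (α i))
    · exact HasFDerivWithinAt.of_notMem_closure fun h =>
        htα (isClosed_Icc.closure_subset h).2
  have hright : HasDerivWithinAt (betaPen P α lam0 i)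
      (max (P.dψ i (α i)) (P.dψ i t) - P.dψ i t) (Ici (α i)) t := by
    by_cases htα : α i ≤ t
    · have hconst : ∀ s ∈ Ici (α i), betaPen P α lam0 i s = lam0 := fun s hs =>
        betaPen_of_le_abs h𝒞 hα (h𝒞.mem_of_nonneg ((hα i).1.le.trans hs)) (le_abs.2 (.inl hs))
      rw [max_eq_right (hmono hα𝒞 ht𝒞 htα), sub_self]
      exact (hasDerivWithinAt_const t _ lam0).congr hconst (hconst t htα)
    · exact HasFDerivWithinAt.of_notMem_closure (by simpa using htα)
  simpa [Icc_union_Ici_eq_Ici (hα i).1.le] using hleft.union hright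

lemma continuousOn_betaPen (h𝒞 : IsRayOrLine 𝒞) (hα : P.IsThreshold lam0 α) :
    ContinuousOn (betaPen P α lam0 i) 𝒞 := by
  have habs : ContinuousOn (fun t => betaPen P α lam0 i |t|) 𝒞 :=
    ContinuousOn.comp (t := Ici 0)
      (fun t ht => (hasDerivWithinAt_betaPen h𝒞 hα ht).continuousWithinAt)
      continuous_abs.continuousOn fun t _ => abs_nonneg t
  exact habs.congr fun t ht => (betaPen_abs h𝒞 ht).symm

end Penalty

section Subdifferential

variable {𝒞 : Set ℝ} {dψ : ℝ → ℝ} {a t z : ℝ}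

lemma subdiffH_of_pos (hmono : MonotoneOn dψ (Ici 0)) (ha : 0 ≤ a) (ht : 0 < t) :
    subdiffH 𝒞 dψ a t = {max (dψ a) (dψ t)} := by
  have hmax : max (dψ a) (dψ t) = if t ≤ a then dψ a else dψ t := by
    split_ifs with hta
    · exact max_eq_left (hmono ht.le ha hta)
    · exact max_eq_right (hmono ha ht.le (le_of_not_ge hta))
  unfold subdiffH
  rw [hmax]
  split_ifs <;> simp_all [ht.ne', abs_of_pos ht, Real.sign_of_pos ht]

lemma max_mem_subdiffH (hmono : MonotoneOn dψ (Ici 0)) (hnonneg : 0 ≤ dψ 0) (ha : 0 ≤ a)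
    (ht : 0 ≤ t) : max (dψ a) (dψ t) ∈ subdiffH 𝒞 dψ a t := by
  rcases ht.eq_or_lt with rfl | ht
  · have h0a : dψ 0 ≤ dψ a := hmono self_mem_Ici ha ha
    rw [max_eq_left h0a]
    unfold subdiffH
    split_ifs <;> simp_all [hnonneg.trans h0a]
  · exact subdiffH_of_pos hmono ha ht ▸ mem_singleton _

lemma le_max_of_mem_subdiffH (hmono : MonotoneOn dψ (Ici 0)) (ha : 0 ≤ a) (ht : 0 ≤ t)
    (hz : z ∈ subdiffH 𝒞 dψ a t) : z ≤ max (dψ a) (dψ t) := by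
  rcases ht.eq_or_lt with rfl | ht
  · refine le_max_of_le_left ?_
    unfold subdiffH at hz
    split_ifs at hz <;> simp_all
  · rw [subdiffH_of_pos hmono ha ht, mem_singleton_iff] at hz
    exact hz.le

lemma neg_mem_subdiffH_neg (h𝒞 : 𝒞 = univ) (hodd : ∀ t, dψ (-t) = -dψ t)
    (hz : z ∈ subdiffH 𝒞 dψ a t) : -z ∈ subdiffH 𝒞 dψ a (-t) := by
  unfold subdiffH at hz ⊢
  split_ifs at hz ⊢ <;> simp_all [Real.sign_neg]
  linarith

end Subdifferential

namespace PsiSetting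

variable {N : ℕ} {𝒞 : Set ℝ} (P : PsiSetting N 𝒞) (α : Fin N → ℝ)
  {lam0 CK : ℝ} (i : Fin N) {g t v z : ℝ}

lemma monotoneOn_dψ_Ici (h𝒞 : IsRayOrLine 𝒞) : MonotoneOn (P.dψ i) (Ici 0) :=
  (P.strictMonoOn_dψ i).monotoneOn.mono fun _ => h𝒞.mem_of_nonneg

variable {P α i}

lemma exists_mem_subdiffH_hasDerivWithinAt_of_nonneg (h𝒞 : IsRayOrLine 𝒞)
    (hα : P.IsThreshold lam0 α) {a d s : ℝ} (h0 : 0 ≤ a + s * d) (hd : a + s * d = 0 → 0 ≤ d) :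
    ∃ z ∈ subdiffH 𝒞 (P.dψ i) (α i) (a + s * d),
      HasDerivWithinAt (fun r => betaPen P α lam0 i (a + r * d))
        ((z - P.dψ i (a + s * d)) * d) (Ici s) s := by
  refine ⟨_, max_mem_subdiffH (P.monotoneOn_dψ_Ici i h𝒞) (P.dψ_zero_nonneg i h𝒞)
    (hα i).1.le h0, ?_⟩
  have hline : HasDerivWithinAt (fun r => a + r * d) d (Ici s) s := by
    simpa using ((hasDerivWithinAt_id s (Ici s)).mul_const d).const_add a
  have hβ := hasDerivWithinAt_betaPen (i := i) h𝒞 hα h0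
  rcases h0.eq_or_lt with h0 | h0
  · refine hβ.comp s hline fun r (hr : s ≤ r) => ?_
    have : 0 ≤ (r - s) * d := mul_nonneg (sub_nonneg.2 hr) (hd h0.symm)
    rw [mem_Ici]
    linarith
  · exact (hβ.hasDerivAt (Ici_mem_nhds h0)).comp_hasDerivWithinAt s hline

-- The further point `r` is what forces `0 ≤ d` when the path starts at the endpoint of `[0, ∞)`.
lemma exists_mem_subdiffH_hasDerivWithinAt (h𝒞 : IsRayOrLine 𝒞)
    (hα : P.IsThreshold lam0 α) {a d r s : ℝ} (hsr : s < r) (hs : a + s * d ∈ 𝒞)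
    (hr : a + r * d ∈ 𝒞) :
    ∃ z ∈ subdiffH 𝒞 (P.dψ i) (α i) (a + s * d),
      HasDerivWithinAt (fun r => betaPen P α lam0 i (a + r * d))
        ((z - P.dψ i (a + s * d)) * d) (Ici s) s := by
  by_cases h : 0 ≤ a + s * d ∧ (a + s * d = 0 → 0 ≤ d)
  · exact exists_mem_subdiffH_hasDerivWithinAt_of_nonneg h𝒞 hα h.1 h.2
  have huniv : 𝒞 = univ := by
    by_contra hne
    obtain rfl := h𝒞.resolve_left hne
    refine h ⟨hs, fun h0 => ?_⟩
    have : 0 ≤ (r - s) * d := by linarith [mem_Ici.1 hr]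
    exact nonneg_of_mul_nonneg_right this (sub_pos.2 hsr)
  have hneg : -a + s * -d = -(a + s * d) := by ring
  obtain ⟨z, hz, hderiv⟩ := exists_mem_subdiffH_hasDerivWithinAt_of_nonneg h𝒞 hα
    (i := i) (a := -a) (d := -d) (s := s) (by grind) (by grind)
  rw [hneg] at hz hderiv
  refine ⟨-z, by simpa using neg_mem_subdiffH_neg huniv (P.hodd huniv i) hz, ?_⟩
  convert hderiv using 1
  · funext r
    rw [← betaPen_neg huniv]
    ring_nf
  · rw [P.hodd huniv]
    ring

variable (P α CK i v g)

/-- The magnitude condition `C_K > 1, v ∉ [-α_i, α_i]` or `C_K ≤ 1, ψ_i'(v) ∉ [-ρ_i, ρ_i]` placed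
on a nonzero entry `v` of the oracle solution. -/
def IsActiveAt : Prop :=
  (1 < CK ∧ v ∉ Icc (-α i) (α i)) ∨
    (CK ≤ 1 ∧ P.dψ i v ∉ Icc (-((P.dψ i (α i) - P.dψ i 0) / CK + P.dψ i 0))
      ((P.dψ i (α i) - P.dψ i 0) / CK + P.dψ i 0))

/-- The smallness condition placed on the partial derivative `g` of the data term at a zero entry
of the oracle solution. -/
def IsInactiveAt : Prop :=
  (1 < CK ∧ |g| ≤ P.dψ i (α i) - P.dψ i 0) ∨ (CK ≤ 1 ∧ |g| < CK * (P.dψ i (α i) - P.dψ i 0))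

variable {P α CK i v g}

lemma IsActiveAt.neg (h𝒞 : 𝒞 = univ) (h : P.IsActiveAt α CK i v) : P.IsActiveAt α CK i (-v) := by
  unfold IsActiveAt at h ⊢
  rwa [P.hodd h𝒞, ← Set.mem_neg, ← Set.mem_neg, neg_Icc, neg_Icc, neg_neg, neg_neg]

lemma IsInactiveAt.neg (h : P.IsInactiveAt α CK i g) : P.IsInactiveAt α CK i (-g) := by
  unfold IsInactiveAt
  rwa [abs_neg]

lemma IsInactiveAt.mono {g' : ℝ} (h : P.IsInactiveAt α CK i g) (hg : |g'| ≤ |g|) :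
    P.IsInactiveAt α CK i g' :=
  Or.imp (And.imp_right hg.trans) (And.imp_right hg.trans_lt) h

lemma dψ_zero_lt_threshold (h𝒞 : IsRayOrLine 𝒞) (hα : 0 < α i) : P.dψ i 0 < P.dψ i (α i) :=
  P.strictMonoOn_dψ i h𝒞.zero_mem (h𝒞.mem_of_nonneg hα.le) hα

lemma IsActiveAt.lt_and_lt_of_nonneg (h𝒞 : IsRayOrLine 𝒞) (hα : 0 < α i) (hCK : 0 < CK)
    (h : P.IsActiveAt α CK i v) (hv : 0 ≤ v) :
    α i < v ∧ P.dψ i (α i) - P.dψ i 0 < CK * (P.dψ i v - P.dψ i 0) := by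
  have hα𝒞 : α i ∈ 𝒞 := h𝒞.mem_of_nonneg hα.le
  have hv𝒞 : v ∈ 𝒞 := h𝒞.mem_of_nonneg hv
  have h0 := P.dψ_zero_nonneg i h𝒞
  have h0α := P.dψ_zero_lt_threshold h𝒞 hα
  have h0v : P.dψ i 0 ≤ P.dψ i v := (P.strictMonoOn_dψ i).monotoneOn h𝒞.zero_mem hv𝒞 hv
  rcases h with ⟨hCK1, hvα⟩ | ⟨hCK1, hvρ⟩
  · have hαv : α i < v := not_le.1 fun hle => hvα ⟨by linarith, hle⟩
    have := P.strictMonoOn_dψ i hα𝒞 hv𝒞 hαv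
    exact ⟨hαv, by nlinarith⟩
  · have hρ : 0 < (P.dψ i (α i) - P.dψ i 0) / CK := div_pos (sub_pos.2 h0α) hCK
    have hρv : (P.dψ i (α i) - P.dψ i 0) / CK < P.dψ i v - P.dψ i 0 :=
      lt_of_not_ge fun hle => hvρ ⟨by linarith, by linarith⟩
    rw [div_lt_iff₀' hCK] at hρv
    exact ⟨((P.strictMonoOn_dψ i).lt_iff_lt hα𝒞 hv𝒞).1 (by nlinarith), hρv⟩

lemma IsActiveAt.threshold_lt_abs (h𝒞 : IsRayOrLine 𝒞) (hα : 0 < α i) (hCK : 0 < CK)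
    (h : P.IsActiveAt α CK i v) (hv : v ∈ 𝒞) : α i < |v| := by
  rcases le_or_gt 0 v with h0 | h0
  · exact lt_abs.2 (.inl (h.lt_and_lt_of_nonneg h𝒞 hα hCK h0).1)
  · have hneg := h.neg (h𝒞.eq_univ_of_neg_mem hv h0)
    exact lt_abs.2 (.inr (hneg.lt_and_lt_of_nonneg h𝒞 hα hCK (neg_nonneg.2 h0.le)).1)

lemma IsActiveAt.ne_zero (h𝒞 : IsRayOrLine 𝒞) (hα : 0 < α i) (hCK : 0 < CK)
    (h : P.IsActiveAt α CK i v) (hv : v ∈ 𝒞) : v ≠ 0 :=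
  abs_pos.1 (hα.trans (h.threshold_lt_abs h𝒞 hα hCK hv))

lemma IsInactiveAt.pos_of_pos (h𝒞 : IsRayOrLine 𝒞) (hα : 0 < α i) (hCK : 0 < CK)
    (h : P.IsInactiveAt α CK i g) (ht : 0 < t) (hz : z ∈ subdiffH 𝒞 (P.dψ i) (α i) t) :
    0 < g + CK * (P.dψ i t - P.dψ i 0) + (z - P.dψ i t) := by
  have h0t := P.strictMonoOn_dψ i h𝒞.zero_mem (h𝒞.mem_of_nonneg ht.le) ht
  rw [subdiffH_of_pos (P.monotoneOn_dψ_Ici i h𝒞) hα.le ht, mem_singleton_iff] at hz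
  subst hz
  have hα_le := le_max_left (P.dψ i (α i)) (P.dψ i t)
  have ht_le := le_max_right (P.dψ i (α i)) (P.dψ i t)
  rcases h with ⟨hCK1, hg⟩ | ⟨hCK1, hg⟩
  · nlinarith [neg_le_of_abs_le hg]
  · nlinarith [neg_lt_of_abs_lt hg]

lemma IsInactiveAt.pairing_pos (h𝒞 : IsRayOrLine 𝒞) (hα : 0 < α i) (hCK : 0 < CK)
    (h : P.IsInactiveAt α CK i g) (ht : t ∈ 𝒞) (ht0 : t ≠ 0)
    (hz : z ∈ subdiffH 𝒞 (P.dψ i) (α i) t) :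
    0 < (g + CK * (P.dψ i t - P.dψ i 0) + (z - P.dψ i t)) * t := by
  rcases ht0.lt_or_gt with ht0 | ht0
  · have huniv := h𝒞.eq_univ_of_neg_mem ht ht0
    have hpos := h.neg.pos_of_pos h𝒞 hα hCK (neg_pos.2 ht0)
      (neg_mem_subdiffH_neg huniv (P.hodd huniv i) hz)
    rw [P.hodd huniv, P.dψ_zero i huniv] at hpos
    rw [P.dψ_zero i huniv]
    exact mul_pos_of_neg_of_neg (by linarith) ht0
  · exact mul_pos (h.pos_of_pos h𝒞 hα hCK ht0 hz) ht0

lemma le_dψ_of_mem_subdiffH_of_neg (h𝒞 : 𝒞 = univ) (hα : 0 ≤ α i) (ht : t < 0)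
    (hz : z ∈ subdiffH 𝒞 (P.dψ i) (α i) t) : z ≤ P.dψ i t := by
  have hneg := neg_mem_subdiffH_neg h𝒞 (P.hodd h𝒞 i) hz
  rw [subdiffH_of_pos (P.monotoneOn_dψ_Ici i (.inl h𝒞)) hα (neg_pos.2 ht),
    mem_singleton_iff] at hneg
  have hle : P.dψ i (-t) ≤ -z := hneg ▸ le_max_right _ _
  rw [P.hodd h𝒞] at hle
  exact neg_le_neg_iff.1 hle

lemma IsActiveAt.neg_of_lt (h𝒞 : IsRayOrLine 𝒞) (hα : 0 < α i) (hCK : 0 < CK)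
    (h : P.IsActiveAt α CK i v) (hv : 0 ≤ v) (ht : t ∈ 𝒞) (htv : t < v)
    (hz : z ∈ subdiffH 𝒞 (P.dψ i) (α i) t) :
    CK * (P.dψ i t - P.dψ i v) + (z - P.dψ i t) < 0 := by
  have hα𝒞 : α i ∈ 𝒞 := h𝒞.mem_of_nonneg hα.le
  have hv𝒞 : v ∈ 𝒞 := h𝒞.mem_of_nonneg hv
  obtain ⟨hαv, hdψv⟩ := h.lt_and_lt_of_nonneg h𝒞 hα hCK hv
  have htv' : CK * (P.dψ i t - P.dψ i v) < 0 :=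
    mul_neg_of_pos_of_neg hCK (sub_neg.2 (P.strictMonoOn_dψ i ht hv𝒞 htv))
  rcases lt_or_ge t 0 with ht0 | ht0
  · linarith [le_dψ_of_mem_subdiffH_of_neg (h𝒞.eq_univ_of_neg_mem ht ht0) hα.le ht0 hz]
  have hz_le := le_max_of_mem_subdiffH (P.monotoneOn_dψ_Ici i h𝒞) hα.le ht0 hz
  rcases le_total (P.dψ i (α i)) (P.dψ i t) with hαt | htα
  · rw [max_eq_right hαt] at hz_le
    linarith
  · rw [max_eq_left htα] at hz_le
    have h0t := P.monotoneOn_dψ_Ici i h𝒞 self_mem_Ici ht0 ht0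
    have hαv' := P.strictMonoOn_dψ i hα𝒞 hv𝒞 hαv
    rcases le_total 1 CK with hCK1 | hCK1 <;> nlinarith

lemma IsActiveAt.pairing_pos_of_nonneg (h𝒞 : IsRayOrLine 𝒞) (hα : 0 < α i) (hCK : 0 < CK)
    (h : P.IsActiveAt α CK i v) (hv : 0 ≤ v) (ht : t ∈ 𝒞) (htv : t ≠ v)
    (hz : z ∈ subdiffH 𝒞 (P.dψ i) (α i) t) :
    0 < (CK * (P.dψ i t - P.dψ i v) + (z - P.dψ i t)) * (t - v) := by
  rcases htv.lt_or_gt with htv | hvt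
  · exact mul_pos_of_neg_of_neg (h.neg_of_lt h𝒞 hα hCK hv ht htv hz) (sub_neg.2 htv)
  · have hdψ := P.strictMonoOn_dψ i (h𝒞.mem_of_nonneg hv) ht hvt
    rw [subdiffH_of_pos (P.monotoneOn_dψ_Ici i h𝒞) hα.le (hv.trans_lt hvt),
      mem_singleton_iff] at hz
    have hz_ge : P.dψ i t ≤ z := hz ▸ le_max_right _ _
    exact mul_pos (by nlinarith) (sub_pos.2 hvt)

lemma IsActiveAt.pairing_pos (h𝒞 : IsRayOrLine 𝒞) (hα : 0 < α i) (hCK : 0 < CK)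
    (h : P.IsActiveAt α CK i v) (hv : v ∈ 𝒞) (ht : t ∈ 𝒞) (htv : t ≠ v)
    (hz : z ∈ subdiffH 𝒞 (P.dψ i) (α i) t) :
    0 < (CK * (P.dψ i t - P.dψ i v) + (z - P.dψ i t)) * (t - v) := by
  rcases le_or_gt 0 v with hv0 | hv0
  · exact h.pairing_pos_of_nonneg h𝒞 hα hCK hv0 ht htv hz
  · have huniv := h𝒞.eq_univ_of_neg_mem hv hv0
    have hpos := (h.neg huniv).pairing_pos_of_nonneg h𝒞 hα hCK (neg_nonneg.2 hv0.le)
      (huniv ▸ mem_univ (-t)) (neg_injective.ne htv)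
      (neg_mem_subdiffH_neg huniv (P.hodd huniv i) hz)
    rw [P.hodd huniv, P.hodd huniv] at hpos
    linarith

end PsiSetting

namespace FidSetting

variable {M N : ℕ} (S : FidSetting M N) {x : Fin N → ℝ} {i : Fin N}

lemma isRayOrLine : IsRayOrLine S.𝒞 := S.h𝒞

lemma convex_feas : Convex ℝ S.feas := fun _ hx _ hy _ _ ha hb hab i =>
  S.isRayOrLine.convex (hx i) (hy i) ha hb hab

variable {S}

lemma update_mem_feas (hx : x ∈ S.feas) {t : ℝ} (ht : t ∈ S.𝒞) :
    Function.update x i t ∈ S.feas := fun k => by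
  rcases eq_or_ne k i with rfl | hk
  · rwa [Function.update_self]
  · rw [Function.update_of_ne hk]
    exact hx k

lemma F_nonneg (hx : x ∈ S.feas) : 0 ≤ S.F x :=
  Finset.sum_nonneg fun j _ => S.hg_nonneg j _ (interior_subset (S.hdom x hx j))

lemma continuousOn_F : ContinuousOn S.F S.feas := by
  refine continuousOn_finsetSum _ fun j _ x hx => ?_
  have hlin : Continuous fun x => S.A.mulVec x j :=
    (continuous_apply j).comp (continuous_const.matrix_mulVec continuous_id)
  exact (ContinuousAt.comp (f := fun x => S.A.mulVec x j)
    (S.hg_deriv j _ (S.hdom x hx j)).continuousAt hlin.continuousAt).continuousWithinAt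

lemma hasDerivAt_F_comp {γ : ℝ → Fin N → ℝ} {d : Fin N → ℝ} {t : ℝ} (hγ : HasDerivAt γ d t)
    (ht : γ t ∈ S.feas) : HasDerivAt (fun s => S.F (γ s)) (dotp (S.gradF (γ t)) d) t := by
  have hlin : ∀ j, HasDerivAt (fun s => S.A.mulVec (γ s) j) (S.A.mulVec d j) t := fun j => by
    unfold Matrix.mulVec dotProduct
    exact HasDerivAt.fun_sum fun i _ => (hasDerivAt_pi.1 hγ i).const_mul (S.A j i)
  have hchain : dotp (S.gradF (γ t)) d
      = ∑ j, S.dg j (S.A.mulVec (γ t) j) * S.A.mulVec d j := by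
    calc dotp (S.gradF (γ t)) d
        = ∑ i, ∑ j, S.dg j (S.A.mulVec (γ t) j) * (S.A j i * d i) := by
          simp only [dotp, gradF, Finset.sum_mul]
          exact Finset.sum_congr rfl fun i _ => Finset.sum_congr rfl fun j _ => by ring
      _ = ∑ j, ∑ i, S.dg j (S.A.mulVec (γ t) j) * (S.A j i * d i) := Finset.sum_comm
      _ = _ := by simp only [Matrix.mulVec, dotProduct, Finset.mul_sum]
  rw [hchain]
  exact HasDerivAt.fun_sum fun j _ => (S.hg_deriv j _ (S.hdom _ ht j)).comp t (hlin j)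

lemma hasDerivAt_F_update (hx : x ∈ S.feas) :
    HasDerivAt (fun t => S.F (Function.update x i t)) (S.gradF x i) (x i) := by
  have hF := hasDerivAt_F_comp (S := S) (hasDerivAt_update x i (x i))
    (update_mem_feas hx (hx i))
  simpa [dotp, Pi.single_apply] using hF

lemma abs_gradF_le : |S.gradF x i| ≤
    enorm2 (fun j => S.A j i) * enorm2 (fun j => S.dg j (S.A.mulVec x j)) :=
  abs_dotp_le (fun j => S.A j i) _

end FidSetting

section Objective

variable {M N : ℕ} {S : FidSetting M N} {P : PsiSetting N S.𝒞} {α : Fin N → ℝ} {lam0 CK : ℝ}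
  {K : ℕ} {x xhat : Fin N → ℝ} {i : Fin N}

lemma continuousOn_JPsi (hα : P.IsThreshold lam0 α) : ContinuousOn (JPsi S P α lam0) S.feas :=
  FidSetting.continuousOn_F.add <| continuousOn_finsetSum _ fun i _ =>
    (continuousOn_betaPen S.isRayOrLine hα).comp (continuous_apply i).continuousOn
      fun _ hx => hx i

lemma continuousOn_JPsi_update (hα : P.IsThreshold lam0 α) (hx : x ∈ S.feas) :
    ContinuousOn (fun t => JPsi S P α lam0 (Function.update x i t)) S.𝒞 := by
  have hupdate : Continuous (Function.update x i) := continuous_const.update i continuous_id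
  exact (continuousOn_JPsi hα).comp hupdate.continuousOn fun t => FidSetting.update_mem_feas hx

lemma JPsi_le_J0 (hα : P.IsThreshold lam0 α) (hx : x ∈ S.feas) :
    JPsi S P α lam0 x ≤ J0 S lam0 x := by
  unfold JPsi J0
  rw [norm0_mul_eq_sum]
  gcongr with i
  split_ifs with hi
  · rw [hi, betaPen_zero (hα i).1.le]
  · exact betaPen_le S.isRayOrLine hα (hx i)

/-- `x` has no entry strictly between zero and its threshold, i.e. in the range where the penalty
`β_{ψ_i}` differs from `λ₀ ‖·‖₀`. -/
def IsThresholded (α x : Fin N → ℝ) : Prop := ∀ i, x i = 0 ∨ α i ≤ |x i|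

lemma JPsi_eq_J0 (hα : P.IsThreshold lam0 α) (hx : x ∈ S.feas) (hx' : IsThresholded α x) :
    JPsi S P α lam0 x = J0 S lam0 x := by
  unfold JPsi J0
  rw [norm0_mul_eq_sum]
  congr! 2 with i
  split_ifs with hi
  · rw [hi, betaPen_zero (hα i).1.le]
  · exact betaPen_of_le_abs S.isRayOrLine hα (hx i) ((hx' i).resolve_left hi)

lemma exists_update_JPsi_lt (hα : P.IsThreshold lam0 α) (hCC : CCond S P α lam0)
    (hx : x ∈ S.feas) (h0 : x i ≠ 0) (hlt : |x i| < α i) :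
    ∃ c ∈ S.𝒞, (c = 0 ∨ α i ≤ |c|) ∧
      JPsi S P α lam0 (Function.update x i c) < JPsi S P α lam0 x := by
  have h𝒞 := S.isRayOrLine
  have hcont := continuousOn_JPsi_update hα hx (i := i)
  obtain ⟨hconc_neg, hconc_pos⟩ := hCC x hx i
  rw [abs_lt] at hlt
  rcases h0.lt_or_gt with hneg | hpos
  · have huniv := h𝒞.eq_univ_of_neg_mem (hx i) hneg
    rcases exists_endpoint_lt_of_strictConcaveOn hconc_neg
      (hcont.mono (huniv ▸ subset_univ _)) ⟨hlt.1, hneg⟩ with h | h <;>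
      rw [Function.update_eq_self] at h
    · exact ⟨_, huniv ▸ mem_univ _, .inr (by simp [le_abs_self]), h⟩
    · exact ⟨_, huniv ▸ mem_univ _, .inl rfl, h⟩
  · rcases exists_endpoint_lt_of_strictConcaveOn hconc_pos
      (hcont.mono fun t ht => h𝒞.mem_of_nonneg ht.1) ⟨hpos, hlt.2⟩ with h | h <;>
      rw [Function.update_eq_self] at h
    · exact ⟨_, h𝒞.zero_mem, .inl rfl, h⟩
    · exact ⟨_, h𝒞.mem_of_nonneg (hα i).1.le, .inr (le_abs_self _), h⟩

lemma exists_thresholded_on_JPsi_le (hα : P.IsThreshold lam0 α) (hCC : CCond S P α lam0)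
    (s : Finset (Fin N)) (hx : x ∈ S.feas) :
    ∃ y ∈ S.feas, (∀ i ∈ s, y i = 0 ∨ α i ≤ |y i|) ∧
      (y = x ∨ JPsi S P α lam0 y < JPsi S P α lam0 x) := by
  induction s using Finset.induction_on with
  | empty => exact ⟨x, hx, by simp, .inl rfl⟩
  | insert k s _ ih =>
    obtain ⟨y, hy, hys, hyx⟩ := ih
    by_cases hk : y k = 0 ∨ α k ≤ |y k|
    · exact ⟨y, hy, Finset.forall_mem_insert _ _ _ |>.2 ⟨hk, hys⟩, hyx⟩
    push Not at hk
    obtain ⟨c, hc, hck, hlt⟩ := exists_update_JPsi_lt hα hCC hy hk.1 hk.2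
    refine ⟨Function.update y k c, FidSetting.update_mem_feas hy hc, fun i hi => ?_, .inr ?_⟩
    · rcases eq_or_ne i k with rfl | hik
      · rwa [Function.update_self]
      · rw [Function.update_of_ne hik]
        exact hys i (Finset.mem_of_mem_insert_of_ne hi hik)
    · rcases hyx with rfl | hyx
      exacts [hlt, hlt.trans hyx]

lemma exists_isThresholded_JPsi_lt (hα : P.IsThreshold lam0 α) (hCC : CCond S P α lam0)
    (hx : x ∈ S.feas) :
    ∃ y ∈ S.feas, IsThresholded α y ∧ (y = x ∨ JPsi S P α lam0 y < JPsi S P α lam0 x) := by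
  obtain ⟨y, hy, hyα, hyx⟩ := exists_thresholded_on_JPsi_le hα hCC Finset.univ hx
  exact ⟨y, hy, fun i => hyα i (Finset.mem_univ i), hyx⟩

lemma J0_lt_of_lt_norm0 (hlam0 : 0 ≤ lam0) (hx : x ∈ S.feas) (hfar : K < norm0 (x - xhat))
    (hgap : S.F xhat < lam0 * (1 + K - 2 * norm0 xhat)) : J0 S lam0 xhat < J0 S lam0 x := by
  have hcard : (1 + K - norm0 xhat : ℝ) ≤ norm0 x := by
    have := hfar.trans_le (norm0_sub_le x xhat)
    rw [sub_le_iff_le_add]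
    exact_mod_cast (by lia : 1 + K ≤ norm0 x + norm0 xhat)
  have hlam0_card := mul_le_mul_of_nonneg_left hcard hlam0
  unfold J0
  linarith [FidSetting.F_nonneg hx]

lemma exists_mem_subdiffH_hasDerivWithinAt_JPsi (hα : P.IsThreshold lam0 α) {d : Fin N → ℝ}
    {r s : ℝ} (hsr : s < r) (hs : x + s • d ∈ S.feas) (hr : x + r • d ∈ S.feas) :
    ∃ z : Fin N → ℝ, (∀ i, z i ∈ subdiffH S.𝒞 (P.dψ i) (α i) ((x + s • d) i)) ∧
      HasDerivWithinAt (fun s : ℝ => JPsi S P α lam0 (x + s • d))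
        (dotp (z - zmap S P (x + s • d)) d) (Ici s) s := by
  choose z hz hβ using fun i => PsiSetting.exists_mem_subdiffH_hasDerivWithinAt (P := P) (i := i)
    S.isRayOrLine hα hsr (hs i) (hr i)
  have hγ : HasDerivAt (fun s : ℝ => x + s • d) d s := by
    simpa using ((hasDerivAt_id s).smul_const d).const_add x
  have hpairing : dotp (z - zmap S P (x + s • d)) d
      = dotp (S.gradF (x + s • d)) d + ∑ i, (z i - P.dψ i (x i + s * d i)) * d i := by
    simp only [dotp, zmap, Pi.sub_apply, Pi.add_apply, Pi.smul_apply, smul_eq_mul,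
      ← Finset.sum_add_distrib]
    exact Finset.sum_congr rfl fun i _ => by ring
  refine ⟨z, hz, ?_⟩
  rw [hpairing]
  exact (FidSetting.hasDerivAt_F_comp hγ hs).hasDerivWithinAt.add
    (HasDerivWithinAt.fun_sum fun i _ => hβ i)

lemma BRSCholds.anti {X Y : Set (Fin N → ℝ)} (h : BRSCholds S P X K CK) (hYX : Y ⊆ X) :
    BRSCholds S P Y K CK := fun x hx => h x (hYX hx)

/-- `x` is a stationary point of the data term on its support, with the gap conditions of the
theorem between its active entries and the gradient at its inactive ones. -/
structure IsSeparated (S : FidSetting M N) (P : PsiSetting N S.𝒞) (α : Fin N → ℝ) (CK : ℝ)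
    (x : Fin N → ℝ) : Prop where
  mem_feas : x ∈ S.feas
  gradF_eq_zero : ∀ i, x i ≠ 0 → S.gradF x i = 0
  isActiveAt : ∀ i, x i ≠ 0 → P.IsActiveAt α CK i (x i)
  isInactiveAt : ∀ i, x i = 0 → P.IsInactiveAt α CK i (S.gradF x i)

namespace IsSeparated

lemma isThresholded (h : IsSeparated S P α CK xhat) (hα : P.IsThreshold lam0 α) (hCK : 0 < CK) :
    IsThresholded α xhat := fun i => or_iff_not_imp_left.2 fun hi =>
  ((h.isActiveAt i hi).threshold_lt_abs S.isRayOrLine (hα i).1 hCK (h.mem_feas i)).le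

lemma pairing_pos (h : IsSeparated S P α CK xhat) (hα : P.IsThreshold lam0 α) (hCK : 0 < CK)
    {t z : ℝ} (ht : t ∈ S.𝒞) (hne : t ≠ xhat i) (hz : z ∈ subdiffH S.𝒞 (P.dψ i) (α i) t) :
    0 < (S.gradF xhat i + CK * (P.dψ i t - P.dψ i (xhat i)) + (z - P.dψ i t))
      * (t - xhat i) := by
  by_cases hi : xhat i = 0
  · have hpos := (h.isInactiveAt i hi).pairing_pos S.isRayOrLine (hα i).1 hCK ht (hi ▸ hne) hz
    rwa [hi, sub_zero]
  · rw [h.gradF_eq_zero i hi, zero_add]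
    exact (h.isActiveAt i hi).pairing_pos S.isRayOrLine (hα i).1 hCK (h.mem_feas i) ht hne hz

lemma dotp_pos (h : IsSeparated S P α CK xhat) (hα : P.IsThreshold lam0 α) (hCK : 0 < CK)
    (hBRSC : BRSCholds S P {xhat} K CK) (hx : x ∈ S.feas) (hne : x ≠ xhat)
    (hK : norm0 (x - xhat) ≤ K) {z : Fin N → ℝ}
    (hz : ∀ i, z i ∈ subdiffH S.𝒞 (P.dψ i) (α i) (x i)) :
    0 < dotp (z - zmap S P x) (x - xhat) := by
  have hbrsc := hBRSC xhat rfl x hx hne.symm (by rwa [← norm0_neg, neg_sub])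
  have hsum : 0 < ∑ i, (S.gradF xhat i + CK * (P.dψ i (x i) - P.dψ i (xhat i))
      + (z i - P.dψ i (x i))) * (x i - xhat i) := by
    obtain ⟨k, hk⟩ := Function.ne_iff.1 hne
    refine Finset.sum_pos' (fun i _ => ?_) ⟨k, Finset.mem_univ k,
      h.pairing_pos hα hCK (hx k) hk (hz k)⟩
    rcases eq_or_ne (x i) (xhat i) with hi | hi
    · rw [hi, sub_self (xhat i), mul_zero]
    · exact (h.pairing_pos hα hCK (hx i) hi (hz i)).le
  have hsplit : dotp (z - zmap S P x) (x - xhat)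
      = ∑ i, (S.gradF xhat i + CK * (P.dψ i (x i) - P.dψ i (xhat i))
          + (z i - P.dψ i (x i))) * (x i - xhat i)
        + (dotp (S.gradF xhat - S.gradF x) (xhat - x)
          - CK * dotp (P.gradPsi xhat - P.gradPsi x) (xhat - x)) := by
    simp only [dotp, zmap, PsiSetting.gradPsi, Pi.sub_apply, Finset.mul_sum,
      ← Finset.sum_sub_distrib, ← Finset.sum_add_distrib]
    exact Finset.sum_congr rfl fun i _ => by ring
  linarith

lemma lt_norm0_of_isCritical (h : IsSeparated S P α CK xhat) (hα : P.IsThreshold lam0 α)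
    (hCK : 0 < CK) (hBRSC : BRSCholds S P {xhat} K CK) (hx : IsCritical S P α x)
    (hne : x ≠ xhat) : K < norm0 (x - xhat) := by
  by_contra! hK
  have hpos := h.dotp_pos hα hCK hBRSC hx.1 hne hK hx.2
  simp [dotp] at hpos

lemma JPsi_lt_of_norm0_le (h : IsSeparated S P α CK xhat) (hα : P.IsThreshold lam0 α)
    (hCK : 0 < CK) (hBRSC : BRSCholds S P {xhat} K CK) (hx : x ∈ S.feas) (hne : x ≠ xhat)
    (hK : norm0 (x - xhat) ≤ K) : JPsi S P α lam0 xhat < JPsi S P α lam0 x := by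
  set d := x - xhat with hd
  have hmem : ∀ s ∈ Icc (0 : ℝ) 1, xhat + s • d ∈ S.feas := fun s hs =>
    S.convex_feas.add_smul_sub_mem h.mem_feas hx hs
  have hcont : ContinuousOn (fun s : ℝ => JPsi S P α lam0 (xhat + s • d)) (Icc 0 1) :=
    (continuousOn_JPsi hα).comp (by fun_prop) hmem
  have hderiv : ∀ s ∈ Ioo (0 : ℝ) 1, ∃ f' > 0,
      HasDerivWithinAt (fun s : ℝ => JPsi S P α lam0 (xhat + s • d)) f' (Ici s) s := by
    intro s hs
    have hs_mem := hmem s (Ioo_subset_Icc_self hs)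
    obtain ⟨z, hz, hJ⟩ := exists_mem_subdiffH_hasDerivWithinAt_JPsi hα hs.2 hs_mem
      (hmem 1 (right_mem_Icc.2 zero_le_one))
    have hpos := h.dotp_pos hα hCK hBRSC hs_mem (by simp [hd, sub_eq_zero, hne, hs.1.ne'])
      (by simpa using (norm0_smul_le s d).trans hK) hz
    rw [add_sub_cancel_left, dotp_smul] at hpos
    exact ⟨_, (mul_pos_iff_of_pos_left hs.1).1 hpos, hJ⟩
  simpa [hd] using lt_of_hasDerivWithinAt_Ici_pos zero_lt_one hcont hderiv

lemma JPsi_lt (h : IsSeparated S P α CK xhat) (hα : P.IsThreshold lam0 α) (hCK : 0 < CK)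
    (hBRSC : BRSCholds S P {xhat} K CK) (hCC : CCond S P α lam0) (hlam0 : 0 ≤ lam0)
    (hgap : S.F xhat < lam0 * (1 + K - 2 * norm0 xhat)) (hx : x ∈ S.feas) (hne : x ≠ xhat) :
    JPsi S P α lam0 xhat < JPsi S P α lam0 x := by
  obtain ⟨y, hy, hyα, hyx⟩ := exists_isThresholded_JPsi_lt hα hCC hx
  rcases eq_or_ne y xhat with rfl | hy_ne
  · exact hyx.resolve_left hne.symm
  have hlt : JPsi S P α lam0 xhat < JPsi S P α lam0 y := by
    rcases le_or_gt (norm0 (y - xhat)) K with hnear | hfar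
    · exact h.JPsi_lt_of_norm0_le hα hCK hBRSC hy hy_ne hnear
    · rw [JPsi_eq_J0 hα h.mem_feas (h.isThresholded hα hCK), JPsi_eq_J0 hα hy hyα]
      exact J0_lt_of_lt_norm0 hlam0 hy hfar hgap
  rcases hyx with rfl | hyx
  exacts [hlt, hlt.trans hyx]

lemma J0_lt (h : IsSeparated S P α CK xhat) (hα : P.IsThreshold lam0 α) (hCK : 0 < CK)
    (hBRSC : BRSCholds S P {xhat} K CK) (hCC : CCond S P α lam0) (hlam0 : 0 ≤ lam0)
    (hgap : S.F xhat < lam0 * (1 + K - 2 * norm0 xhat)) (hx : x ∈ S.feas) (hne : x ≠ xhat) :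
    J0 S lam0 xhat < J0 S lam0 x := by
  rw [← JPsi_eq_J0 hα h.mem_feas (h.isThresholded hα hCK)]
  exact (h.JPsi_lt hα hCK hBRSC hCC hlam0 hgap hx hne).trans_le (JPsi_le_J0 hα hx)

end IsSeparated

end Objective

section Oracle

variable {M N : ℕ} {S : FidSetting M N} {P : PsiSetting N S.𝒞} {α : Fin N → ℝ}
  {CK : ℝ} {x : Fin N → ℝ} {i : Fin N} {σ : Finset (Fin N)} {u : {i // i ∈ σ} → ℝ}

lemma zpad_of_mem (hi : i ∈ σ) : zpad σ u i = u ⟨i, hi⟩ := dif_pos hi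

lemma zpad_of_notMem (hi : i ∉ σ) : zpad σ u i = 0 := dif_neg hi

lemma zpad_suppF_restrict (x : Fin N → ℝ) : zpad (suppF x) (fun i => x i) = x := by
  funext i
  by_cases hi : x i = 0 <;> simp [zpad, suppF, hi]

lemma zpad_update (i : {i // i ∈ σ}) (t : ℝ) :
    zpad σ (Function.update u i t) = Function.update (zpad σ u) i t := by
  funext k
  by_cases hk : k ∈ σ
  · simp only [zpad_of_mem hk, Function.update_apply, Subtype.ext_iff]
  · rw [zpad_of_notMem hk, Function.update_of_ne (ne_of_mem_of_not_mem i.2 hk).symm,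
      zpad_of_notMem hk]

lemma zpad_mem_feas (hu : ∀ j, u j ∈ S.𝒞) : zpad σ u ∈ S.feas := fun i => by
  by_cases hi : i ∈ σ
  · exact zpad_of_mem (u := u) hi ▸ hu ⟨i, hi⟩
  · exact zpad_of_notMem (u := u) hi ▸ S.isRayOrLine.zero_mem

lemma card_suppF (x : Fin N → ℝ) : (suppF x).card = norm0 x := rfl

lemma suppF_zpad (hu : ∀ j, u j ≠ 0) : suppF (zpad σ u) = σ := by
  ext i
  by_cases hi : i ∈ σ
  · simp [suppF, zpad_of_mem hi, hu, hi]
  · simp [suppF, zpad_of_notMem hi, hi]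

lemma gradF_eq_zero_of_forall_update_le (hx : x ∈ S.feas) (hxi : x i ≠ 0)
    (hmin : ∀ t ∈ S.𝒞, S.F x ≤ S.F (Function.update x i t)) : S.gradF x i = 0 := by
  have hloc : IsLocalMin (fun t => S.F (Function.update x i t)) (x i) := by
    filter_upwards [S.isRayOrLine.mem_nhds_of_ne_zero (hx i) hxi] with t ht
    rw [Function.update_eq_self]
    exact hmin t ht
  exact hloc.hasDerivAt_eq_zero (FidSetting.hasDerivAt_F_update hx)

/-- `u` minimizes `F_σ` over the vectors with entries in `𝒞`. -/
def IsRestrictedMin (S : FidSetting M N) (σ : Finset (Fin N)) (u : {i // i ∈ σ} → ℝ) : Prop :=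
  (∀ j, u j ∈ S.𝒞) ∧ ∀ v : {i // i ∈ σ} → ℝ, (∀ j, v j ∈ S.𝒞) → Fres S σ u ≤ Fres S σ v

lemma IsRestrictedMin.gradF_zpad_eq_zero (h : IsRestrictedMin S σ u) {j : {i // i ∈ σ}}
    (hj : u j ≠ 0) : S.gradF (zpad σ u) j = 0 := by
  refine gradF_eq_zero_of_forall_update_le (zpad_mem_feas h.1)
    (by rwa [zpad_of_mem j.2]) fun t ht => ?_
  rw [← zpad_update]
  refine h.2 _ fun k => ?_
  rw [Function.update_apply]
  split_ifs
  exacts [ht, h.1 k]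

lemma IsRestrictedMin.F_zpad_le {u : {i // i ∈ suppF x} → ℝ}
    (h : IsRestrictedMin S (suppF x) u) (hx : x ∈ S.feas) :
    S.F (zpad (suppF x) u) ≤ S.F x := by
  have hle := h.2 (fun i => x i) fun i => hx i
  rwa [Fres, Fres, zpad_suppF_restrict] at hle

lemma IsRestrictedMin.isSeparated_zpad (h : IsRestrictedMin S σ u) (hne : ∀ j, u j ≠ 0)
    (hactive : ∀ j, P.IsActiveAt α CK j.1 (u j))
    (hinactive : ∀ i ∉ σ, P.IsInactiveAt α CK i (S.gradF (zpad σ u) i)) :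
    IsSeparated S P α CK (zpad σ u) where
  mem_feas := zpad_mem_feas h.1
  gradF_eq_zero i hi := by
    have hσ : i ∈ σ := not_imp_comm.1 zpad_of_notMem hi
    exact h.gradF_zpad_eq_zero (hne ⟨i, hσ⟩)
  isActiveAt i hi := by
    have hσ : i ∈ σ := not_imp_comm.1 zpad_of_notMem hi
    exact zpad_of_mem (u := u) hσ ▸ hactive ⟨i, hσ⟩
  isInactiveAt i hi := hinactive i fun hσ => hne ⟨i, hσ⟩ (zpad_of_mem (u := u) hσ ▸ hi)

lemma IsRestrictedMin.isInactiveAt_zpad {Ltil : ℝ} {u : {i // i ∈ suppF x} → ℝ}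
    (h : IsRestrictedMin S (suppF x) u) (hx : x ∈ S.feas) (hLtil : 0 ≤ Ltil)
    (hdesc : enorm2 (fun j => S.dg j (S.A.mulVec (zpad (suppF x) u) j))
      ≤ √(2 * Ltil * S.F (zpad (suppF x) u)))
    (hb : P.IsInactiveAt α CK i (enorm2 (fun j => S.A j i) * √(2 * Ltil * S.F x))) :
    P.IsInactiveAt α CK i (S.gradF (zpad (suppF x) u) i) :=
  hb.mono <| calc
    |S.gradF (zpad (suppF x) u) i|
      ≤ enorm2 (fun j => S.A j i) * enorm2 (fun j => S.dg j (S.A.mulVec (zpad (suppF x) u) j)) :=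
        FidSetting.abs_gradF_le
    _ ≤ enorm2 (fun j => S.A j i) * √(2 * Ltil * S.F x) := by
        have hF := h.F_zpad_le hx
        gcongr
        · exact enorm2_nonneg _
        · exact hdesc.trans (by gcongr)
    _ ≤ |enorm2 (fun j => S.A j i) * √(2 * Ltil * S.F x)| := le_abs_self _

end Oracle

theorem stmt15_general {M N : ℕ} (S : FidSetting M N) (P : PsiSetting N S.𝒞) {lam0 : ℝ}
    {α : Fin N → ℝ} (hα : P.IsThreshold lam0 α) {xstar : Fin N → ℝ} (hxstar : xstar ∈ S.feas)
    {uor : {i // i ∈ suppF xstar} → ℝ} (huor : IsRestrictedMin S (suppF xstar) uor)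
    {K : ℕ} (hK : 2 * (suppF xstar).card ≤ K) {CK : ℝ} (hCK : 0 < CK)
    (hBRSC : BRSCholds S P {zpad (suppF xstar) uor} K CK) (hCC : CCond S P α lam0)
    {Ltil : ℝ} (hLtil : 0 ≤ Ltil)
    (hdesc : enorm2 (fun j => S.dg j (S.A.mulVec (zpad (suppF xstar) uor) j))
      ≤ √(2 * Ltil * S.F (zpad (suppF xstar) uor)))
    (hactive : ∀ j, P.IsActiveAt α CK j.1 (uor j))
    (hinactive : ∀ i ∉ suppF xstar, P.IsInactiveAt α CK i
      (enorm2 (fun j => S.A j i) * √(2 * Ltil * S.F xstar)))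
    (hlambig : S.F xstar / (1 + (K : ℝ) - 2 * ((suppF xstar).card : ℝ)) < lam0) :
    (∀ x' ∈ S.feas, x' ≠ zpad (suppF xstar) uor →
      JPsi S P α lam0 (zpad (suppF xstar) uor) < JPsi S P α lam0 x') ∧
    (∀ x' ∈ S.feas, x' ≠ zpad (suppF xstar) uor →
      J0 S lam0 (zpad (suppF xstar) uor) < J0 S lam0 x') ∧
    suppF (zpad (suppF xstar) uor) = suppF xstar ∧
    (∀ x' : Fin N → ℝ, IsCritical S P α x' → x' ≠ zpad (suppF xstar) uor →
      K < norm0 (x' - zpad (suppF xstar) uor)) := by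
  have hne : ∀ j, uor j ≠ 0 := fun j =>
    (hactive j).ne_zero S.isRayOrLine (hα j).1 hCK (huor.1 j)
  have hsep : IsSeparated S P α CK (zpad (suppF xstar) uor) :=
    huor.isSeparated_zpad hne hactive fun i hi =>
      huor.isInactiveAt_zpad hxstar hLtil hdesc (hinactive i hi)
  have hsupp : suppF (zpad (suppF xstar) uor) = suppF xstar := suppF_zpad hne
  have hden : 0 < 1 + (K : ℝ) - 2 * (suppF xstar).card := by
    have : (2 * (suppF xstar).card : ℝ) ≤ K := mod_cast hK
    linarith
  have hlam0 : 0 ≤ lam0 := (div_nonneg (FidSetting.F_nonneg hxstar) hden.le).trans hlambig.le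
  have hgap : S.F (zpad (suppF xstar) uor)
      < lam0 * (1 + K - 2 * norm0 (zpad (suppF xstar) uor)) := by
    rw [← card_suppF, hsupp]
    exact (huor.F_zpad_le hxstar).trans_lt ((div_lt_iff₀ hden).1 hlambig)
  exact ⟨fun _ hx hx_ne => hsep.JPsi_lt hα hCK hBRSC hCC hlam0 hgap hx hx_ne,
    fun _ hx hx_ne => hsep.J0_lt hα hCK hBRSC hCC hlam0 hgap hx hx_ne, hsupp,
    fun _ hx hx_ne => hsep.lt_norm0_of_isCritical hα hCK hBRSC hx hx_ne⟩

/-- Theorem 4.8: sufficient conditions for the oracle solution to be the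
unique global minimizer of `J_Ψ` (and of `J₀`), isolated in terms of sparsity. -/
theorem stmt15 {M N : ℕ} (S : FidSetting M N) (P : PsiSetting N S.𝒞)
    (lam0 : ℝ) (hlam0 : 0 < lam0) (α : Fin N → ℝ)
    (hα : ∀ i, 0 < α i ∧ dBreg (P.ψ i) (P.dψ i) 0 (α i) = lam0)
    -- the oracle setting: `x*`, its support, full column rank of `A_{σ*}`,
    -- and the oracle solution `u^or` (the unique minimizer of `F_{σ*}` over `𝒞^{k*}`)
    (xstar : Fin N → ℝ) (hxstar : xstar ∈ S.feas) (hσne : (suppF xstar).Nonempty)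
    (hrank : LinearIndependent ℝ fun i : {i // i ∈ suppF xstar} => fun j : Fin M => S.A j i.1)
    (uor : {i // i ∈ suppF xstar} → ℝ)
    (huor_feas : ∀ j, uor j ∈ S.𝒞)
    (huor_min : ∀ u : {i // i ∈ suppF xstar} → ℝ, (∀ j, u j ∈ S.𝒞) →
      Fres S (suppF xstar) uor ≤ Fres S (suppF xstar) u)
    (huor_uniq : ∀ u : {i // i ∈ suppF xstar} → ℝ, (∀ j, u j ∈ S.𝒞) →
      Fres S (suppF xstar) u ≤ Fres S (suppF xstar) uor → u = uor)
    -- BRSC w.r.t. `Ψ`, a compact convex `X` containing `x^or` and `x*`, and `K ≥ 2k*`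
    (X : Set (Fin N → ℝ)) (hXfeas : X ⊆ S.feas) (hXcomp : IsCompact X) (hXconv : Convex ℝ X)
    (hXor : zpad (suppF xstar) uor ∈ X) (hXstar : xstar ∈ X)
    (K : ℕ) (hK : 2 * (suppF xstar).card ≤ K) (CK : ℝ) (hCK : 0 < CK)
    (hBRSC : BRSCholds S P X K CK)
    (hCC : CCond S P α lam0)
    (Ltil : ℝ) (hLtil : 0 < Ltil)
    (hdesc : ∀ x ∈ S.feas,
      enorm2 (fun j => S.dg j (S.A.mulVec x j)) ≤ Real.sqrt (2 * Ltil * S.F x))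
    (Sreg : Set ({i // i ∈ suppF xstar} → ℝ)) (hSsub : ∀ u ∈ Sreg, ∀ j, u j ∈ S.𝒞)
    (hSor : uor ∈ Sreg)
    -- case (a) `C_K > 1` with `S ∩ Ω = ∅`, or case (b) `C_K ≤ 1` with `S ∩ Ω̃ = ∅`
    (hcases :
      (1 < CK ∧
        Sreg ∩ {u | ∃ j, u j ∈ Set.Icc (-(α j.1)) (α j.1)} = ∅ ∧
        ∀ i, i ∉ suppF xstar →
          enorm2 (fun j => S.A j i) * Real.sqrt (2 * Ltil * S.F xstar)
            ≤ P.dψ i (α i) - P.dψ i 0) ∨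
      (CK ≤ 1 ∧
        Sreg ∩ {u | ∃ j, P.dψ j.1 (u j) ∈
          Set.Icc (-((P.dψ j.1 (α j.1) - P.dψ j.1 0) / CK + P.dψ j.1 0))
                  ((P.dψ j.1 (α j.1) - P.dψ j.1 0) / CK + P.dψ j.1 0)} = ∅ ∧
        ∀ i, i ∉ suppF xstar →
          enorm2 (fun j => S.A j i) * Real.sqrt (2 * Ltil * S.F xstar)
            < CK * (P.dψ i (α i) - P.dψ i 0)))
    -- `λ₀ > F(x*)/(1 + K - 2k*)`
    (hlambig : S.F xstar / (1 + (K : ℝ) - 2 * ((suppF xstar).card : ℝ)) < lam0) :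
    (∀ x' ∈ S.feas, x' ≠ zpad (suppF xstar) uor →
      JPsi S P α lam0 (zpad (suppF xstar) uor) < JPsi S P α lam0 x') ∧
    (∀ x' ∈ S.feas, x' ≠ zpad (suppF xstar) uor →
      J0 S lam0 (zpad (suppF xstar) uor) < J0 S lam0 x') ∧
    suppF (zpad (suppF xstar) uor) = suppF xstar ∧
    (∀ x' : Fin N → ℝ, IsCritical S P α x' → x' ≠ zpad (suppF xstar) uor →
      K < norm0 (x' - zpad (suppF xstar) uor)) := by
  have hactive : ∀ j, P.IsActiveAt α CK j.1 (uor j) := fun j =>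
    hcases.imp (And.imp_right fun h => forall_not_of_inter_eq_empty h.1 hSor j)
      (And.imp_right fun h => forall_not_of_inter_eq_empty h.1 hSor j)
  have hinactive : ∀ i ∉ suppF xstar, P.IsInactiveAt α CK i
      (enorm2 (fun j => S.A j i) * √(2 * Ltil * S.F xstar)) := fun i hi => by
    rw [PsiSetting.IsInactiveAt,
      abs_of_nonneg (mul_nonneg (enorm2_nonneg _) (Real.sqrt_nonneg _))]
    exact hcases.imp (And.imp_right fun h => h.2 i hi) (And.imp_right fun h => h.2 i hi)
  exact stmt15_general S P hα hxstar ⟨huor_feas, huor_min⟩ hK hCK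
    (hBRSC.anti (singleton_subset_iff.2 hXor)) hCC hLtil.le (hdesc _ (hXfeas hXor)) hactive
    hinactive hlambig
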